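/- Every PGA-program can be rewritten into a first canonical form using only the axioms PGA1–PGA4: for every PGA-program X there is a PGA-program X' such that X = X' is derivable from PGA1 ((X;Y);Z = X;(Y;Z)), PGA2 ((X^n)^ω = X^ω for n ≥ 1), PGA3 (X^ω;Y = X^ω) and PGA4 ((X;Y)^ω = X;(Y;X)^ω), and X' is either repetition-free or of the form Y;Z^ω with Y and Z repetition-free. -/

import Mathlib

/-- Primitive instructions over a set `A` of basic instructions:
basic instructions `a`, positive tests `+a`, negative tests `-a`,
jump instructions `#k` and the termination instruction `!`. -/
inductive PrimInstr (A : Type) : Type where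
  | basic (a : A)
  | pos (a : A)
  | neg (a : A)
  | jump (k : Nat)
  | halt
deriving DecidableEq

/-- PGA-programs over `A`: primitive instructions, concatenation `X;Y`
and repetition `X^ω`. -/
inductive PGA (A : Type) : Type where
  | prim (u : PrimInstr A)
  | seq (X Y : PGA A)
  | rep (X : PGA A)
deriving DecidableEq

/-- `X.pow n` is the power `X^n` for `n ≥ 1`: `X^1 = X` and `X^(n+1) = X ; X^n`.
(The value at `0` is irrelevant and set to `X`; all statements only use `n ≥ 1`.) -/
def PGA.pow {A : Type} (X : PGA A) : Nat → PGA A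
  | 0 => X
  | 1 => X
  | n+2 => X.seq (X.pow (n+1))

/-- Equational-logic derivability from the axioms PGA1-PGA4 of program algebra. -/
inductive DerivPGA {A : Type} : PGA A → PGA A → Prop
  | refl (X : PGA A) : DerivPGA X X
  | symm {X Y : PGA A} : DerivPGA X Y → DerivPGA Y X
  | trans {X Y Z : PGA A} : DerivPGA X Y → DerivPGA Y Z → DerivPGA X Z
  | seq_congr {X X' Y Y' : PGA A} : DerivPGA X X' → DerivPGA Y Y' → DerivPGA (X.seq Y) (X'.seq Y')
  | rep_congr {X Y : PGA A} : DerivPGA X Y → DerivPGA X.rep Y.rep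
  | pga1 (X Y Z : PGA A) : DerivPGA ((X.seq Y).seq Z) (X.seq (Y.seq Z))
  | pga2 (X : PGA A) (n : ℕ) (hn : 1 ≤ n) : DerivPGA ((X.pow n).rep) X.rep
  | pga3 (X Y : PGA A) : DerivPGA (X.rep.seq Y) X.rep
  | pga4 (X Y : PGA A) : DerivPGA ((X.seq Y).rep) (X.seq ((Y.seq X).rep))

/-- A PGA-program is repetition-free if it contains no repetition operator. -/
def RepFree {A : Type} : PGA A → Prop
  | .prim _ => True
  | .seq X Y => RepFree X ∧ RepFree Y
  | .rep _ => False

theorem rep_unfold' {A : Type} (X : PGA A) : DerivPGA X.rep (X.seq (X.seq X).rep) :=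
  (DerivPGA.pga2 X 2 (by norm_num)).symm.trans (DerivPGA.pga4 X X)

theorem rep_rep' {A : Type} (Z : PGA A) : DerivPGA Z.rep.rep Z.rep :=
  (rep_unfold' Z.rep).trans (DerivPGA.pga3 _ _)

/-- Every PGA-program can be rewritten, using only PGA1-PGA4, into a first
canonical form: one that is repetition-free, or of the form `Y ; Z^ω` with
`Y` and `Z` repetition-free. -/
theorem exists_first_canonical_form (A : Type) (X : PGA A) :
    ∃ X' : PGA A, DerivPGA X X' ∧
      (RepFree X' ∨ ∃ Y Z : PGA A, X' = Y.seq Z.rep ∧ RepFree Y ∧ RepFree Z) := by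
  induction X with
  | prim u => exact ⟨_, .refl _, Or.inl trivial⟩
  | seq P Q ihP ihQ =>
    obtain ⟨P', hP, hP' | ⟨Y, Z, rfl, hY, hZ⟩⟩ := ihP
    · obtain ⟨Q', hQ, hQ' | ⟨Y, Z, rfl, hY, hZ⟩⟩ := ihQ
      · exact ⟨_, .seq_congr hP hQ, Or.inl ⟨hP', hQ'⟩⟩
      · exact ⟨_, (DerivPGA.seq_congr hP hQ).trans (DerivPGA.pga1 _ _ _).symm,
          Or.inr ⟨P'.seq Y, Z, rfl, ⟨hP', hY⟩, hZ⟩⟩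
    · exact ⟨_, ((DerivPGA.seq_congr hP (.refl Q)).trans (DerivPGA.pga1 _ _ _)).trans
        (.seq_congr (.refl _) (.pga3 _ _)), Or.inr ⟨Y, Z, rfl, hY, hZ⟩⟩
  | rep P ihP =>
    obtain ⟨P', hP, hP' | ⟨Y, Z, rfl, hY, hZ⟩⟩ := ihP
    · exact ⟨_, (DerivPGA.rep_congr hP).trans (rep_unfold' P'),
        Or.inr ⟨P', P'.seq P', rfl, hP', hP', hP'⟩⟩
    · exact ⟨_, ((DerivPGA.rep_congr hP).trans (DerivPGA.pga4 _ _)).trans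
        (.seq_congr (.refl _) ((DerivPGA.rep_congr (.pga3 _ _)).trans (rep_rep' Z))),
        Or.inr ⟨Y, Z, rfl, hY, hZ⟩⟩
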